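/- arXiv:2503.11463 — 2 statements merged into one kernel-verified Lean document; each statement's English description precedes it below -/
import Mathlib

section
/- Let n ≥ 1, let σ be a permutation of [n], and let m ≥ 1. There exists a pile assignment P : [n] → [m] that sorts σ on stacks if and only if descruns(σ) ≤ m. -/
/-!
Order the cards by the key `(P s, σ s)`, lexicographically and with the second coordinate reversed:
`P` sorts `σ` exactly when the key is strictly increasing on `[n]`, which is a condition on
consecutive cards only. It says that `P` never decreases, and that it increases at every ascent of
`σ`. Hence `P n` exceeds `P 1` by at least the number of ascents, while the assignment sending each
card to the index of its descending run uses one pile per run.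
-/

/-- `P` sorts `σ` on stacks: for all `s, t ∈ [n]`,
`s < t` iff `P s < P t`, or `P s = P t` and `σ s > σ t`. -/
def SortsOnStacks (n : ℕ) (σ P : ℕ → ℕ) : Prop :=
  ∀ s ∈ Finset.Icc 1 n, ∀ t ∈ Finset.Icc 1 n,
    (s < t ↔ P s < P t ∨ (P s = P t ∧ σ t < σ s))

/-- The number of ascents of `σ`, `|{s ∈ [n−1] : σ(s+1) > σ(s)}|`. -/
def ascents (n : ℕ) (σ : ℕ → ℕ) : ℕ :=
  ((Finset.Icc 1 (n - 1)).filter (fun s => σ s < σ (s + 1))).card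

/-- The number of descending runs of `σ`, `1 + ascs(σ)`. -/
def descRuns (n : ℕ) (σ : ℕ → ℕ) : ℕ := 1 + ascents n σ

lemma strictMonoOn_Icc_iff_forall_lt_succ {ι α : Type*} [PartialOrder ι] [SuccOrder ι]
    [IsSuccArchimedean ι] [Preorder α] {f : ι → α} {a b : ι} :
    StrictMonoOn f (Set.Icc a b) ↔ ∀ i ∈ Set.Ico a b, f i < f (Order.succ i) := by
  constructor
  · intro hf i hi
    exact hf ⟨hi.1, hi.2.le⟩ ⟨hi.1.trans (Order.le_succ i), Order.succ_le_of_lt hi.2⟩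
      (Order.lt_succ_of_not_isMax hi.2.not_isMax)
  · intro hf
    refine strictMonoOn_of_lt_succ Set.ordConnected_Icc fun i hmax hi hi' ↦ ?_
    exact hf i ⟨hi.1, (Order.lt_succ_of_not_isMax hmax).trans_le hi'.2⟩

/-- The place of card `s` in the deck gathered after dealing into the piles `P`: the pile comes
first, and within a pile the later dealt card lies on top, whence the order dual. -/
def stackKey {ι α β : Type*} (σ : ι → α) (P : ι → β) (s : ι) : β ×ₗ αᵒᵈ :=
  toLex (P s, OrderDual.toDual (σ s))

lemma stackKey_lt_stackKey {ι α β : Type*} [LT α] [LT β] {σ : ι → α} {P : ι → β} {s t : ι} :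
    stackKey σ P s < stackKey σ P t ↔ P s < P t ∨ (P s = P t ∧ σ t < σ s) :=
  Prod.Lex.toLex_lt_toLex

section Sorting

variable {n : ℕ} {σ P : ℕ → ℕ}

lemma sortsOnStacks_iff_strictMonoOn :
    SortsOnStacks n σ P ↔ StrictMonoOn (stackKey σ P) (Set.Icc 1 n) := by
  simp only [SortsOnStacks, ← stackKey_lt_stackKey, Finset.mem_Icc]
  exact ⟨fun h s hs t ht ↦ (h s hs t ht).1, fun h s hs t ht ↦ (h.lt_iff_lt hs ht).symm⟩

lemma sortsOnStacks_iff_forall_add_one :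
    SortsOnStacks n σ P ↔
      ∀ s ∈ Set.Ico 1 n, P s < P (s + 1) ∨ (P s = P (s + 1) ∧ σ (s + 1) < σ s) := by
  simp only [sortsOnStacks_iff_strictMonoOn, strictMonoOn_Icc_iff_forall_lt_succ,
    stackKey_lt_stackKey, Order.succ_eq_add_one]

end Sorting

section Ascents

variable {n : ℕ} {σ : ℕ → ℕ}

lemma ascents_one (σ : ℕ → ℕ) : ascents 1 σ = 0 := by
  simp [ascents]

lemma ascents_add_one (σ : ℕ → ℕ) (hn : 1 ≤ n) :
    ascents (n + 1) σ = ascents n σ + if σ n < σ (n + 1) then 1 else 0 := by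
  obtain ⟨k, rfl⟩ := Nat.exists_eq_add_of_le' hn
  simp only [ascents, Finset.card_filter, Nat.add_sub_cancel]
  exact Finset.sum_Icc_succ_top hn _

lemma ascents_mono (σ : ℕ → ℕ) : Monotone (ascents · σ) := fun _ _ h ↦
  Finset.card_le_card <| Finset.filter_subset_filter _ <|
    Finset.Icc_subset_Icc_right <| Nat.sub_le_sub_right h 1

lemma SortsOnStacks.add_ascents_le {P : ℕ → ℕ} (hP : SortsOnStacks n σ P) {s : ℕ} (hs : 1 ≤ s)
    (hsn : s ≤ n) : P 1 + ascents s σ ≤ P s := by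
  induction s, hs using Nat.le_induction with
  | base => rw [ascents_one, add_zero]
  | succ s hs ih =>
    have ih : P 1 + ascents s σ ≤ P s := ih (Nat.le_of_succ_le hsn)
    have key := sortsOnStacks_iff_forall_add_one.1 hP s ⟨hs, hsn⟩
    rw [ascents_add_one σ hs]
    split_ifs <;> omega

lemma sortsOnStacks_descRuns (hσ : ∀ s ∈ Set.Ico 1 n, σ s ≠ σ (s + 1)) :
    SortsOnStacks n σ (descRuns · σ) := by
  refine sortsOnStacks_iff_forall_add_one.2 fun s hs ↦ ?_
  simp only [descRuns, ascents_add_one σ hs.1]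
  rcases (hσ s hs).lt_or_gt with hasc | hdesc
  · exact .inl (by simp [hasc])
  · exact .inr (by simp [hdesc, hdesc.not_gt])

end Ascents

theorem stmt_7_general {n m : ℕ} (hn : 1 ≤ n) {σ : ℕ → ℕ}
    (hσ : ∀ s ∈ Set.Ico 1 n, σ s ≠ σ (s + 1)) :
    (∃ P : ℕ → ℕ, (∀ s ∈ Finset.Icc 1 n, P s ∈ Finset.Icc 1 m) ∧
      SortsOnStacks n σ P) ↔ descRuns n σ ≤ m := by
  constructor
  · rintro ⟨P, hPm, hP⟩
    calc descRuns n σ = 1 + ascents n σ := rfl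
      _ ≤ P 1 + ascents n σ := by
        gcongr
        exact (Finset.mem_Icc.1 (hPm 1 (Finset.left_mem_Icc.2 hn))).1
      _ ≤ P n := hP.add_ascents_le hn le_rfl
      _ ≤ m := (Finset.mem_Icc.1 (hPm n (Finset.right_mem_Icc.2 hn))).2
  · intro hm
    refine ⟨(descRuns · σ), fun s hs ↦ Finset.mem_Icc.2 ⟨Nat.le_add_right _ _, ?_⟩,
      sortsOnStacks_descRuns hσ⟩
    have hsn : ascents s σ ≤ ascents n σ := ascents_mono σ (Finset.mem_Icc.1 hs).2
    exact (Nat.add_le_add_left hsn 1).trans hm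

theorem stmt_7 (n : ℕ) (hn : 1 ≤ n) (σ : ℕ → ℕ)
    (hσ : Set.BijOn σ (Set.Icc 1 n) (Set.Icc 1 n)) (m : ℕ) (hm : 1 ≤ m) :
    (∃ P : ℕ → ℕ, (∀ s ∈ Finset.Icc 1 n, P s ∈ Finset.Icc 1 m) ∧
      SortsOnStacks n σ P) ↔ descRuns n σ ≤ m :=
  stmt_7_general hn fun s hs ↦
    hσ.injOn.ne ⟨hs.1, hs.2.le⟩ ⟨Nat.le_succ_of_le hs.1, hs.2⟩ s.lt_succ_self.ne
end

section
/- Let n ≥ 1, m ≥ 1, T ≥ 0, and let σ be a permutation of [n]. Then σ can be sorted by m queues in T rounds — i.e., there exist pile assignments P_t : [n] → {0, 1, …, m − 1} and permutations σ_0 = σ, σ_1, …, σ_T of [n] with QShuffle(P_t, σ_{t−1}) = σ_t for each t ∈ [T] and σ_T equal to the identity permutation — if and only if ascruns(σ) ≤ m^T. -/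
/-- `QShuffle(P, σ) = σ'`: a single round of pile shuffle on queues with
assignments `P` transforms `σ` into `σ'`: for all `s, t ∈ [n]`,
`σ' s < σ' t` iff `(P s, σ s)` is lexicographically less than `(P t, σ t)`. -/
def QShuffle (n : ℕ) (P σ σ' : ℕ → ℕ) : Prop :=
  ∀ s ∈ Finset.Icc 1 n, ∀ t ∈ Finset.Icc 1 n,
    (σ' s < σ' t ↔ P s < P t ∨ (P s = P t ∧ σ s < σ t))

/-- The number of descents of `σ`, `|{s ∈ [n−1] : σ(s+1) < σ(s)}|`. -/
def descents (n : ℕ) (σ : ℕ → ℕ) : ℕ :=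
  ((Finset.Icc 1 (n - 1)).filter (fun s => σ (s + 1) < σ s)).card

/-- The number of ascending runs of `σ`, `1 + desc(σ)`. -/
def ascRuns (n : ℕ) (σ : ℕ → ℕ) : ℕ := 1 + descents n σ

/-!
A round with pile numbers `P < M` followed by a round with pile numbers `Q` has the same effect as a
single round with pile numbers `P + M * Q`: this is one step of a radix sort, least significant
digit first. Reading the pile numbers of `T` rounds as base-`m` digits, `T` rounds with `m` queues
are therefore exactly as powerful as one round with `m ^ T` queues.

One round with pile numbers `L` sorts `σ` iff `(L s, σ s)` is lexicographically increasing in `s`.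
Such an `L` is weakly increasing and jumps at every descent of `σ`, so it takes at least
`ascRuns n σ` values; numbering the ascending runs from `0` attains this bound.
-/

section Rank

variable {ι β : Type*} [LinearOrder β] {A : Finset ι} {K : ι → β}

/-- The rank, counted from `1`, of the key of `s` among the keys of the elements of `A`. -/
def rankIn (A : Finset ι) (K : ι → β) (s : ι) : ℕ := (A.filter fun u => K u ≤ K s).card

lemma rankIn_mono {s t : ι} (h : K s ≤ K t) : rankIn A K s ≤ rankIn A K t :=
  Finset.card_le_card <| Finset.monotone_filter_right _ fun _ _ hu => le_trans hu h

lemma rankIn_lt_rankIn_iff {s t : ι} (ht : t ∈ A) :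
    rankIn A K s < rankIn A K t ↔ K s < K t := by
  refine ⟨fun h => lt_of_not_ge fun hle => h.not_ge (rankIn_mono hle), fun h => ?_⟩
  refine Finset.card_lt_card <| (Finset.ssubset_iff_of_subset ?_).mpr ⟨t, ?_, ?_⟩
  · exact Finset.monotone_filter_right _ fun _ _ hu => le_trans hu h.le
  · simpa using ht
  · simpa using fun _ => h

lemma injOn_rankIn (hK : Set.InjOn K A) : Set.InjOn (rankIn A K) A := by
  intro s hs t ht hst
  refine hK hs ht (le_antisymm ?_ ?_)
  · exact le_of_not_gt fun h => hst.not_gt ((rankIn_lt_rankIn_iff hs).mpr h)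
  · exact le_of_not_gt fun h => hst.not_lt ((rankIn_lt_rankIn_iff ht).mpr h)

lemma bijOn_rankIn (hK : Set.InjOn K A) :
    Set.BijOn (rankIn A K) A (Set.Icc 1 A.card) := by
  have hmaps : Set.MapsTo (rankIn A K) A (Finset.Icc 1 A.card) := fun s hs =>
    Finset.mem_coe.mpr <| Finset.mem_Icc.mpr
      ⟨Finset.card_pos.mpr ⟨s, by simpa using hs⟩, Finset.card_filter_le _ _⟩
  rw [← Finset.coe_Icc]
  exact ⟨hmaps, injOn_rankIn hK,
    Finset.surjOn_of_injOn_of_card_le _ hmaps (injOn_rankIn hK) (by simp)⟩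

lemma rankIn_eq_self {n : ℕ} {f : ι → ℕ} (hf : Set.BijOn f A (Set.Icc 1 n)) {s : ι}
    (hs : s ∈ A) : rankIn A f s = f s := by
  have himage : (A.filter fun u => f u ≤ f s).image f = Finset.Icc 1 (f s) := by
    have hA : A.image f = Finset.Icc 1 n := Finset.coe_injective (by simpa using hf.image_eq)
    have hsn : f s ≤ n := (hf.mapsTo hs).2
    rw [← Finset.filter_image (p := (· ≤ f s)), hA]
    ext x
    simp only [Finset.mem_filter, Finset.mem_Icc]
    omega
  have hinj : Set.InjOn f (A.filter fun u => f u ≤ f s) :=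
    hf.injOn.mono (Finset.coe_subset.mpr (Finset.filter_subset _ _))
  rw [rankIn, ← Finset.card_image_of_injOn hinj, himage, Nat.card_Icc, Nat.add_sub_cancel]

end Rank

section Digits

variable {M a b p q : ℕ}

lemma add_mul_lt_add_mul_iff_lex (ha : a < M) (hb : b < M) :
    a + M * p < b + M * q ↔ p < q ∨ (p = q ∧ a < b) := by
  rcases lt_trichotomy p q with h | rfl | h
  · have : M * (p + 1) ≤ M * q := Nat.mul_le_mul_left M h
    rw [Nat.mul_succ] at this
    omega
  · omega
  · have : M * (q + 1) ≤ M * p := Nat.mul_le_mul_left M h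
    rw [Nat.mul_succ] at this
    omega

lemma add_mul_inj_of_lt (ha : a < M) (hb : b < M) :
    a + M * p = b + M * q ↔ p = q ∧ a = b := by
  have hlt := add_mul_lt_add_mul_iff_lex (p := p) (q := q) ha hb
  have hgt := add_mul_lt_add_mul_iff_lex (p := q) (q := p) hb ha
  omega

end Digits

section SingleRound

variable {n : ℕ} {P Q σ σ' σ'' : ℕ → ℕ}

lemma qShuffle_iff_toLex : QShuffle n P σ σ' ↔ ∀ s ∈ Finset.Icc 1 n, ∀ t ∈ Finset.Icc 1 n,
    (σ' s < σ' t ↔ toLex (P s, σ s) < toLex (P t, σ t)) := by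
  simp only [QShuffle, Prod.Lex.toLex_lt_toLex]

lemma QShuffle.congr (h : QShuffle n P σ σ') (hP : ∀ s ∈ Finset.Icc 1 n, P s = Q s)
    (hσ' : ∀ s ∈ Finset.Icc 1 n, σ' s = σ'' s) : QShuffle n Q σ σ'' := by
  intro s hs t ht
  rw [← hP s hs, ← hP t ht, ← hσ' s hs, ← hσ' t ht]
  exact h s hs t ht

lemma qShuffle_zero : QShuffle n (fun _ => 0) σ σ := fun s _ t _ => by simp

lemma QShuffle.comp {M : ℕ} (hP : ∀ s ∈ Finset.Icc 1 n, P s < M) (h : QShuffle n P σ σ')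
    (h' : QShuffle n Q σ' σ'') : QShuffle n (fun s => P s + M * Q s) σ σ'' := by
  intro s hs t ht
  rw [h' s hs t ht, h s hs t ht, add_mul_lt_add_mul_iff_lex (hP s hs) (hP t ht),
    add_mul_inj_of_lt (hP s hs) (hP t ht)]
  tauto

/-- The result of shuffling `σ` with pile assignment `P`, as a function: each card goes to the rank
of its key `(P s, σ s)`. -/
def queueShuffle (n : ℕ) (P σ : ℕ → ℕ) : ℕ → ℕ :=
  rankIn (Finset.Icc 1 n) fun s => toLex (P s, σ s)

lemma qShuffle_queueShuffle : QShuffle n P σ (queueShuffle n P σ) :=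
  qShuffle_iff_toLex.mpr fun _ _ _ ht => rankIn_lt_rankIn_iff ht

lemma bijOn_queueShuffle (hσ : Set.InjOn σ (Set.Icc 1 n)) :
    Set.BijOn (queueShuffle n P σ) (Set.Icc 1 n) (Set.Icc 1 n) := by
  have hkey : Set.InjOn (fun s => toLex (P s, σ s)) (Finset.Icc 1 n) := by
    rw [Finset.coe_Icc]
    exact fun s hs t ht hst => hσ hs ht (Prod.ext_iff.mp (toLex_inj.mp hst)).2
  simpa only [queueShuffle, Finset.coe_Icc, Nat.card_Icc, Nat.add_sub_cancel] using
    bijOn_rankIn hkey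

lemma QShuffle.eq_queueShuffle (h : QShuffle n P σ σ')
    (hσ' : Set.BijOn σ' (Set.Icc 1 n) (Set.Icc 1 n)) {s : ℕ} (hs : s ∈ Finset.Icc 1 n) :
    σ' s = queueShuffle n P σ s := by
  have hrank : rankIn (Finset.Icc 1 n) σ' s = σ' s :=
    rankIn_eq_self (by rwa [Finset.coe_Icc]) hs
  rw [← hrank]
  refine congrArg Finset.card (Finset.filter_congr fun u hu => ?_)
  simpa only [not_lt] using (qShuffle_iff_toLex.mp h s hs u hu).not

end SingleRound

section Rounds

variable {n m T : ℕ} {P : ℕ → ℕ → ℕ} {σ σ' : ℕ → ℕ}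

/-- The pile numbers of card `s` in rounds `1, …, T`, read as base-`m` digits with the first round
least significant. -/
def packedPile (m : ℕ) (P : ℕ → ℕ → ℕ) (T s : ℕ) : ℕ :=
  ∑ t ∈ Finset.range T, m ^ t * P (t + 1) s

lemma packedPile_succ (s : ℕ) :
    packedPile m P (T + 1) s = packedPile m P T s + m ^ T * P (T + 1) s :=
  Finset.sum_range_succ _ _

lemma packedPile_lt {s : ℕ} (hP : ∀ t ∈ Finset.Icc 1 T, P t s < m) :
    packedPile m P T s < m ^ T := by
  induction T with
  | zero => simp [packedPile]
  | succ T ih =>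
    have hlow : packedPile m P T s < m ^ T :=
      ih fun t ht => hP t (Finset.Icc_subset_Icc_right T.le_succ ht)
    calc packedPile m P (T + 1) s
        = packedPile m P T s + m ^ T * P (T + 1) s := packedPile_succ s
      _ < m ^ T + m ^ T * P (T + 1) s := by gcongr
      _ = m ^ T * (P (T + 1) s + 1) := by ring
      _ ≤ m ^ T * m := by gcongr; exact hP _ (by simp)
      _ = m ^ (T + 1) := (pow_succ m T).symm

lemma packedPile_digits (L : ℕ → ℕ) (s : ℕ) :
    packedPile m (fun t s => L s / m ^ (t - 1) % m) T s = L s % m ^ T := by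
  induction T with
  | zero => simp [packedPile, Nat.mod_one]
  | succ T ih => rw [packedPile_succ, ih, Nat.add_sub_cancel, Nat.mod_pow_succ]

lemma qShuffle_packedPile {σs : ℕ → ℕ → ℕ}
    (hP : ∀ t ∈ Finset.Icc 1 T, ∀ s ∈ Finset.Icc 1 n, P t s < m)
    (hQ : ∀ t ∈ Finset.Icc 1 T, QShuffle n (P t) (σs (t - 1)) (σs t)) :
    QShuffle n (packedPile m P T) (σs 0) (σs T) := by
  induction T with
  | zero => exact qShuffle_zero.congr (fun _ _ => by simp [packedPile]) fun _ _ => rfl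
  | succ T ih =>
    have hsub : Finset.Icc 1 T ⊆ Finset.Icc 1 (T + 1) := Finset.Icc_subset_Icc_right T.le_succ
    have hfirst : QShuffle n (packedPile m P T) (σs 0) (σs T) :=
      ih (fun t ht => hP t (hsub ht)) fun t ht => hQ t (hsub ht)
    have hlast : QShuffle n (P (T + 1)) (σs T) (σs (T + 1)) := hQ (T + 1) (by simp)
    have hlow : ∀ s ∈ Finset.Icc 1 n, packedPile m P T s < m ^ T := fun s hs =>
      packedPile_lt fun t ht => hP t (hsub ht) s hs
    exact (hfirst.comp hlow hlast).congr (fun s _ => (packedPile_succ s).symm) fun _ _ => rfl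

/-- The deck after each round, starting from `σ` and shuffling in round `t ≥ 1` with piles `P t`. -/
def queueShuffles (n : ℕ) (P : ℕ → ℕ → ℕ) (σ : ℕ → ℕ) : ℕ → ℕ → ℕ
  | 0 => σ
  | t + 1 => queueShuffle n (P (t + 1)) (queueShuffles n P σ t)

lemma bijOn_queueShuffles (hσ : Set.BijOn σ (Set.Icc 1 n) (Set.Icc 1 n)) (t : ℕ) :
    Set.BijOn (queueShuffles n P σ t) (Set.Icc 1 n) (Set.Icc 1 n) := by
  induction t with
  | zero => exact hσ
  | succ t ih => exact bijOn_queueShuffle ih.injOn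

lemma qShuffle_queueShuffles {t : ℕ} (ht : 1 ≤ t) :
    QShuffle n (P t) (queueShuffles n P σ (t - 1)) (queueShuffles n P σ t) := by
  obtain ⟨t, rfl⟩ := Nat.exists_eq_add_of_le' ht
  exact qShuffle_queueShuffle

/-- The permutation `σ` of `[n]` can be transformed into `σ'` by `T` rounds of pile shuffles on `m`
queues. -/
def ReachableInRounds (n m T : ℕ) (σ σ' : ℕ → ℕ) : Prop :=
  ∃ (P : ℕ → ℕ → ℕ) (σs : ℕ → ℕ → ℕ),
    σs 0 = σ ∧
    (∀ t ∈ Finset.Icc 1 T, Set.BijOn (σs t) (Set.Icc 1 n) (Set.Icc 1 n)) ∧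
    (∀ t ∈ Finset.Icc 1 T, ∀ s ∈ Finset.Icc 1 n, P t s < m) ∧
    (∀ t ∈ Finset.Icc 1 T, QShuffle n (P t) (σs (t - 1)) (σs t)) ∧
    (∀ s ∈ Finset.Icc 1 n, σs T s = σ' s)

lemma ReachableInRounds.exists_qShuffle (h : ReachableInRounds n m T σ σ') :
    ∃ L : ℕ → ℕ, (∀ s ∈ Finset.Icc 1 n, L s < m ^ T) ∧ QShuffle n L σ σ' := by
  obtain ⟨P, σs, rfl, -, hP, hQ, hlast⟩ := h
  exact ⟨packedPile m P T, fun s hs => packedPile_lt fun t ht => hP t ht s hs,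
    (qShuffle_packedPile hP hQ).congr (fun _ _ => rfl) hlast⟩

lemma QShuffle.reachableInRounds {L : ℕ → ℕ} (hm : 0 < m)
    (hσ : Set.BijOn σ (Set.Icc 1 n) (Set.Icc 1 n)) (hσ' : Set.BijOn σ' (Set.Icc 1 n) (Set.Icc 1 n))
    (hL : ∀ s ∈ Finset.Icc 1 n, L s < m ^ T) (h : QShuffle n L σ σ') :
    ReachableInRounds n m T σ σ' := by
  let P : ℕ → ℕ → ℕ := fun t s => L s / m ^ (t - 1) % m
  have hP (t s : ℕ) : P t s < m := Nat.mod_lt _ hm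
  have hQ : ∀ t ∈ Finset.Icc 1 T,
      QShuffle n (P t) (queueShuffles n P σ (t - 1)) (queueShuffles n P σ t) :=
    fun t ht => qShuffle_queueShuffles (Finset.mem_Icc.mp ht).1
  have hpacked : ∀ s ∈ Finset.Icc 1 n, packedPile m P T s = L s := fun s hs =>
    (packedPile_digits L s).trans (Nat.mod_eq_of_lt (hL s hs))
  have hrounds : QShuffle n L σ (queueShuffles n P σ T) :=
    (qShuffle_packedPile (fun t _ s _ => hP t s) hQ).congr hpacked fun _ _ => rfl
  refine ⟨P, queueShuffles n P σ, rfl, fun t _ => bijOn_queueShuffles hσ t,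
    fun t _ s _ => hP t s, hQ, fun s hs => ?_⟩
  rw [hrounds.eq_queueShuffle (bijOn_queueShuffles hσ T) hs, h.eq_queueShuffle hσ' hs]

theorem reachableInRounds_iff_exists_qShuffle (hm : 0 < m)
    (hσ : Set.BijOn σ (Set.Icc 1 n) (Set.Icc 1 n))
    (hσ' : Set.BijOn σ' (Set.Icc 1 n) (Set.Icc 1 n)) :
    ReachableInRounds n m T σ σ' ↔
      ∃ L : ℕ → ℕ, (∀ s ∈ Finset.Icc 1 n, L s < m ^ T) ∧ QShuffle n L σ σ' :=
  ⟨fun h => h.exists_qShuffle, fun ⟨_, hL, h⟩ => h.reachableInRounds hm hσ hσ' hL⟩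

end Rounds

section Descents

variable {n M : ℕ} {σ L : ℕ → ℕ}

lemma descents_mono (σ : ℕ → ℕ) : Monotone fun n => descents n σ := fun _ _ h =>
  Finset.card_le_card <|
    Finset.filter_subset_filter _ (Finset.Icc_subset_Icc_right (Nat.sub_le_sub_right h 1))

lemma descents_succ {s : ℕ} (hs : 1 ≤ s) :
    descents (s + 1) σ = descents s σ + if σ (s + 1) < σ s then 1 else 0 := by
  obtain ⟨s, rfl⟩ := Nat.exists_eq_add_of_le' hs
  simp only [descents, Finset.card_filter, Nat.add_sub_cancel]
  exact Finset.sum_Icc_succ_top hs _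

lemma qShuffle_id_iff_strictMonoOn :
    QShuffle n L σ id ↔ StrictMonoOn (fun s => toLex (L s, σ s)) (Set.Icc 1 n) := by
  rw [qShuffle_iff_toLex]
  simp only [Finset.mem_Icc]
  exact ⟨fun h s hs t ht => (h s hs t ht).mp, fun h s hs t ht => (h.lt_iff_lt hs ht).symm⟩

lemma QShuffle.descents_le (h : QShuffle n L σ id) {s : ℕ} (hs : s ∈ Finset.Icc 1 n) :
    descents s σ ≤ L s := by
  obtain ⟨hs₁, hsn⟩ := Finset.mem_Icc.mp hs
  induction s, hs₁ using Nat.le_induction with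
  | base => simp [descents]
  | succ s hs₁ ih =>
    have hs' : s ∈ Finset.Icc 1 n := Finset.mem_Icc.mpr ⟨hs₁, by omega⟩
    have hle : descents s σ ≤ L s := ih hs' (by omega)
    have hstep : L s < L (s + 1) ∨ (L s = L (s + 1) ∧ σ s < σ (s + 1)) :=
      (h s hs' (s + 1) hs).mp s.lt_succ_self
    rw [descents_succ hs₁]
    split_ifs <;> omega

lemma qShuffle_descents_id (hσ : Set.InjOn σ (Set.Icc 1 n)) :
    QShuffle n (fun s => descents s σ) σ id := by
  refine qShuffle_id_iff_strictMonoOn.mpr <|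
    strictMonoOn_of_lt_add_one Set.ordConnected_Icc fun s _ hs hs' => ?_
  have hne : σ s ≠ σ (s + 1) := hσ.ne hs hs' s.lt_succ_self.ne
  rw [Prod.Lex.toLex_lt_toLex]
  dsimp only
  rw [descents_succ hs.1]
  split_ifs <;> omega

theorem exists_qShuffle_id_iff_ascRuns_le (hn : 1 ≤ n) (hσ : Set.InjOn σ (Set.Icc 1 n)) :
    (∃ L : ℕ → ℕ, (∀ s ∈ Finset.Icc 1 n, L s < M) ∧ QShuffle n L σ id) ↔ ascRuns n σ ≤ M := by
  rw [ascRuns, Nat.one_add_le_iff]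
  constructor
  · rintro ⟨L, hL, h⟩
    have hmem : n ∈ Finset.Icc 1 n := Finset.right_mem_Icc.mpr hn
    exact (h.descents_le hmem).trans_lt (hL n hmem)
  · intro hM
    exact ⟨fun s => descents s σ,
      fun s hs => (descents_mono σ (Finset.mem_Icc.mp hs).2).trans_lt hM, qShuffle_descents_id hσ⟩

end Descents

theorem stmt_16 (n m T : ℕ) (hn : 1 ≤ n) (hm : 1 ≤ m)
    (σ : ℕ → ℕ) (hσ : Set.BijOn σ (Set.Icc 1 n) (Set.Icc 1 n)) :
    (∃ (P : ℕ → ℕ → ℕ) (σs : ℕ → ℕ → ℕ),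
      σs 0 = σ ∧
      (∀ t ∈ Finset.Icc 1 T,
        Set.BijOn (σs t) (Set.Icc 1 n) (Set.Icc 1 n)) ∧
      (∀ t ∈ Finset.Icc 1 T, ∀ s ∈ Finset.Icc 1 n, P t s < m) ∧
      (∀ t ∈ Finset.Icc 1 T, QShuffle n (P t) (σs (t - 1)) (σs t)) ∧
      (∀ s ∈ Finset.Icc 1 n, σs T s = s)) ↔
    ascRuns n σ ≤ m ^ T := by
  calc
    _ ↔ ReachableInRounds n m T σ id := Iff.rfl
    _ ↔ ∃ L : ℕ → ℕ, (∀ s ∈ Finset.Icc 1 n, L s < m ^ T) ∧ QShuffle n L σ id :=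
      reachableInRounds_iff_exists_qShuffle hm hσ (Set.bijOn_id _)
    _ ↔ ascRuns n σ ≤ m ^ T := exists_qShuffle_id_iff_ascRuns_le hn hσ.injOn
end
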